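/- arXiv:2412.09937 — 2 statements merged into one kernel-verified Lean document; each statement's English description precedes it below -/
import Mathlib

section
/- Let q₁ be a prime power, let n ≥ 1 and 1 ≤ r ≤ n−1. The number of distinct Hermitian LCD codes of length n and dimension r over the field F_{q₁²} equals q₁^{r(n−r)} · ∏_{i=0}^{r−1} (q₁^{n−i} − (−1)^{n−i}) / (q₁^{r−i} − (−1)^{r−i}). -/
namespace HLCD

open Module

section fieldfacts

variable {F : Type*} [Field F] [Fintype F] {q : ℕ}

lemma frob (hq : IsPrimePow q) (hcard : Fintype.card F = q ^ 2) (a b : F) :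
    (a + b) ^ q = a ^ q + b ^ q := by
  obtain ⟨p, k, hp, hk, rfl⟩ := hq
  have hp' : p.Prime := hp.nat_prime
  have : Fact p.Prime := ⟨hp'⟩
  have : CharP F p := by
    rw [← pow_mul] at hcard
    exact charP_of_card_eq_prime_pow hcard
  exact add_pow_char_pow a b p k

lemma frob2 (hcard : Fintype.card F = q ^ 2) (a : F) : (a ^ q) ^ q = a := by
  rw [← pow_mul, ← sq, ← hcard, FiniteField.pow_card]

lemma exists_trace (hq : IsPrimePow q) (hcard : Fintype.card F = q ^ 2) :
    ∃ z : F, z + z ^ q ≠ 0 := by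
  by_contra! H
  have h1 : 1 < q := hq.one_lt
  let P : Polynomial F := Polynomial.X ^ q + Polynomial.X
  have hdeg : P.natDegree = q := by
    have : (Polynomial.X : Polynomial F).natDegree < (Polynomial.X ^ q : Polynomial F).natDegree := by
      simpa using h1
    simp only [P]
    rw [Polynomial.natDegree_add_eq_left_of_natDegree_lt this]
    simp
  have hP : P ≠ 0 := by
    intro h
    rw [h] at hdeg
    simp at hdeg
    omega
  have := Polynomial.card_le_degree_of_subset_roots (p := P) (Z := Finset.univ) (by
    intro z _
    rw [Polynomial.mem_roots hP]
    simp only [P, Polynomial.IsRoot, Polynomial.eval_add, Polynomial.eval_pow, Polynomial.eval_X]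
    rw [add_comm]; exact H z)
  rw [Finset.card_univ, hcard, hdeg] at this
  nlinarith

lemma exists_norm (hq : IsPrimePow q) (hcard : Fintype.card F = q ^ 2) (c : F) (hc : c ≠ 0)
    (hcq : c ^ q = c) : ∃ a : F, a ^ (q + 1) = c := by
  classical
  have h1 : 1 < q := hq.one_lt
  obtain ⟨g, hg⟩ := IsCyclic.exists_generator (α := Fˣ)
  obtain ⟨k, hk⟩ := (Submonoid.mem_powers_iff _ _).1 (mem_powers_iff_mem_zpowers.2 (hg (Units.mk0 c hc)))
  have hord : orderOf g = q ^ 2 - 1 := by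
    rw [orderOf_eq_card_of_forall_mem_zpowers hg, Nat.card_eq_fintype_card, Fintype.card_units, hcard]
  have hpow : g ^ (k * (q - 1)) = 1 := by
    rw [pow_mul, hk]
    ext
    simp only [Units.val_pow_eq_pow_val, Units.val_mk0, Units.val_one]
    apply mul_right_cancel₀ hc
    rw [← pow_succ, Nat.sub_add_cancel h1.le, hcq, one_mul]
  have hd := orderOf_dvd_of_pow_eq_one hpow
  rw [hord, show q ^ 2 - 1 = (q + 1) * (q - 1) by
    obtain ⟨m, rfl⟩ : ∃ m, q = m + 1 := ⟨q - 1, by omega⟩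
    simp; ring_nf; omega] at hd
  obtain ⟨j, rfl⟩ := Nat.dvd_of_mul_dvd_mul_right (by omega) hd
  refine ⟨(g ^ j : Fˣ), ?_⟩
  rw [← Units.val_pow_eq_pow_val, ← pow_mul, mul_comm j, hk]
  rfl

lemma card_norm_one (hq : IsPrimePow q) (hcard : Fintype.card F = q ^ 2) :
    Nat.card {a : F // a ^ (q + 1) = 1} = q + 1 := by
  have h1 : 1 < q := hq.one_lt
  have h2 : Nat.card {u : Fˣ // u ^ (q + 1) = 1} = q + 1 := by
    classical
    have h3 := IsCyclic.card_powMonoidHom_ker (G := Fˣ) (q + 1)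
    rw [Nat.card_eq_fintype_card (α := Fˣ), Fintype.card_units, hcard,
      show q ^ 2 - 1 = (q + 1) * (q - 1) by
        obtain ⟨m, rfl⟩ : ∃ m, q = m + 1 := ⟨q - 1, by omega⟩
        simp; ring_nf; omega, Nat.gcd_eq_right (Dvd.intro _ rfl)] at h3
    exact h3
  refine Eq.trans ?_ h2
  refine Nat.card_congr ⟨fun a => ⟨Units.mk0 a.1 ?_, ?_⟩, fun u => ⟨u.1, ?_⟩, ?_, ?_⟩
  · intro h
    have := a.2
    rw [h] at this
    simp at this
  · ext; simpa using a.2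
  · have := congrArg Units.val u.2
    simpa using this
  · intro a; rfl
  · intro u; ext; rfl

lemma card_norm (hq : IsPrimePow q) (hcard : Fintype.card F = q ^ 2) (c : F) (hc : c ≠ 0)
    (hcq : c ^ q = c) : Nat.card {a : F // a ^ (q + 1) = c} = q + 1 := by
  obtain ⟨b, hb⟩ := exists_norm hq hcard c hc hcq
  have hb0 : b ≠ 0 := by rintro rfl; simp at hb; exact hc hb.symm
  refine Eq.trans ?_ (card_norm_one hq hcard)
  refine Nat.card_congr ⟨fun a => ⟨a.1 / b, ?_⟩, fun a => ⟨a.1 * b, ?_⟩, ?_, ?_⟩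
  · rw [div_pow, a.2, hb, div_self hc]
  · rw [mul_pow, a.2, hb, one_mul]
  · intro a; ext; simp [hb0]
  · intro a; ext; simp [hb0]

lemma card_norm_zero : Nat.card {a : F // a ^ (q + 1) = 0} = 1 := by
  have : Unique {a : F // a ^ (q + 1) = 0} :=
    ⟨⟨⟨0, by simp⟩⟩, fun a => Subtype.ext (by simpa using a.2)⟩
  exact Nat.card_unique

end fieldfacts

section forms

variable {F : Type*} [Field F] [Fintype F] {q : ℕ} {V : Type*} [AddCommGroup V] [Module F V]
  [Finite V] (h : V → V →ₗ[F] F)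

/-- nondegenerate subspace -/
def ND (W : Submodule F V) : Prop := ∀ x ∈ W, (∀ y ∈ W, h y x = 0) → x = 0

variable {h}

lemma h_add (hq : IsPrimePow q) (hcard : Fintype.card F = q ^ 2)
    (hc : ∀ x y, h x y = (h y x) ^ q) (x y z : V) : h (x + y) z = h x z + h y z := by
  rw [hc, map_add, frob hq hcard, ← hc, ← hc]

lemma h_smul (hc : ∀ x y, h x y = (h y x) ^ q) (a : F) (x z : V) :
    h (a • x) z = a ^ q * h x z := by
  rw [hc, map_smul, smul_eq_mul, mul_pow, ← hc]

lemma exists_unit (hq : IsPrimePow q) (hcard : Fintype.card F = q ^ 2)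
    (hc : ∀ x y, h x y = (h y x) ^ q) (W : Submodule F V) (hW : ND h W) (hW0 : W ≠ ⊥) :
    ∃ e ∈ W, h e e = 1 := by
  have h1 : 1 < q := hq.one_lt
  obtain ⟨v, hv, hvv⟩ : ∃ v ∈ W, h v v ≠ 0 := by
    by_contra! H
    obtain ⟨x, hx, hx0⟩ := W.exists_mem_ne_zero_of_ne_bot hW0
    have : ¬ ∀ y ∈ W, h y x = 0 := fun hh => hx0 (hW x hx hh)
    push Not at this
    obtain ⟨y, hy, hyx⟩ := this
    obtain ⟨z, hz⟩ := exists_trace hq hcard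
    apply hz
    set a := (z / h y x) ^ q with ha
    have h3 := H (x + a • y) (W.add_mem hx (W.smul_mem _ hy))
    rw [h_add hq hcard hc, h_smul hc, map_add, map_add, map_smul, map_smul, H x hx, H y hy,
      ha, frob2 hcard, hc x y] at h3
    simp only [smul_eq_mul, mul_zero, add_zero, zero_add, ← mul_pow] at h3
    rw [div_mul_cancel₀ _ hyx] at h3
    rw [add_comm]; exact h3
  obtain ⟨a, ha⟩ := exists_norm hq hcard (h v v)⁻¹ (inv_ne_zero hvv) (by rw [inv_pow, ← hc])
  refine ⟨a • v, W.smul_mem _ hv, ?_⟩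
  rw [h_smul hc, map_smul, smul_eq_mul, ← mul_assoc, ← pow_succ, ha, inv_mul_cancel₀ hvv]

lemma finrank_perp (W : Submodule F V) (e : V) (he : e ∈ W) (hee : h e e = 1) :
    finrank F (W ⊓ (h e).ker : Submodule F V) + 1 = finrank F W := by
  have : Module.Finite F V := Module.Finite.of_finite
  have h1 := LinearMap.finrank_range_add_finrank_ker ((h e).comp W.subtype)
  have h2 : ((h e).comp W.subtype).range = ⊤ := by
    rw [LinearMap.range_eq_top]
    intro c
    refine ⟨c • ⟨e, he⟩, ?_⟩
    simp [hee]
  rw [h2, finrank_top, finrank_self, LinearMap.ker_comp,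
    ← Submodule.finrank_map_subtype_eq, Submodule.map_comap_subtype] at h1
  omega

lemma nd_perp (hq : IsPrimePow q) (hcard : Fintype.card F = q ^ 2)
    (hc : ∀ x y, h x y = (h y x) ^ q) (W : Submodule F V) (hW : ND h W)
    (e : V) (he : e ∈ W) (hee : h e e = 1) : ND h (W ⊓ (h e).ker) := by
  have h1 : 1 < q := hq.one_lt
  rintro x ⟨hx, hxe⟩ H
  have hxe' : h e x = 0 := hxe
  apply hW x hx
  intro y hy
  have h2 := H (y + (-(h e y)) • e) ⟨W.add_mem hy (W.smul_mem _ he), by simp [hee]⟩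
  rw [h_add hq hcard hc, h_smul hc, hxe', mul_zero, add_zero] at h2
  exact h2

lemma unit_rec (hq : IsPrimePow q) (hcard : Fintype.card F = q ^ 2)
    (hc : ∀ x y, h x y = (h y x) ^ q) (W : Submodule F V)
    (e : V) (he : e ∈ W) (hee : h e e = 1) :
    Nat.card {v : V // v ∈ W ∧ h v v = 1} +
      q * Nat.card {v : V // v ∈ W ⊓ (h e).ker ∧ h v v = 1} =
      (q + 1) * Nat.card (W ⊓ (h e).ker : Submodule F V) := by
  classical
  have h1 : 1 < q := hq.one_lt
  have key : ∀ w : V, h e w = 0 → ∀ a : F, h (w + a • e) (w + a • e) = h w w + a ^ (q + 1) := by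
    intro w hw a
    have hw' : h w e = 0 := by rw [hc, hw, zero_pow (by omega)]
    rw [h_add hq hcard hc, h_smul hc, map_add, map_add, map_smul, map_smul, hw, hw', hee, pow_succ]
    simp
  have E : {v : V // v ∈ W ∧ h v v = 1} ≃
      Σ w : (W ⊓ (h e).ker : Submodule F V), {a : F // a ^ (q + 1) = 1 - h w.1 w.1} := by
    refine ⟨fun v => ⟨⟨v.1 + (-(h e v.1)) • e, W.add_mem v.2.1 (W.smul_mem _ he), by simp [hee]⟩,
      ⟨h e v.1, ?_⟩⟩, fun p => ⟨p.1.1 + p.2.1 • e, W.add_mem p.1.2.1 (W.smul_mem _ he), ?_⟩, ?_, ?_⟩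
    · have := key (v.1 + (-(h e v.1)) • e) (by simp [hee]) (h e v.1)
      rw [show v.1 + (-(h e v.1)) • e + (h e v.1) • e = v.1 by simp, v.2.2] at this
      exact (sub_eq_of_eq_add' this).symm
    · rw [key _ p.1.2.2, p.2.2]; ring
    · intro v; ext; simp
    · rintro ⟨⟨w, hw⟩, ⟨a, ha⟩⟩
      have hw' : h e w = 0 := hw.2
      have h5 : h e (w + a • e) = a := by simp [hw', hee]
      apply Sigma.subtype_ext
      · apply Subtype.ext
        simp only [h5]
        simp
      · exact h5
  have : Fintype (W ⊓ (h e).ker : Submodule F V) := Fintype.ofFinite _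
  rw [Nat.card_congr E, Nat.card_sigma]
  have E2 : {v : V // v ∈ W ⊓ (h e).ker ∧ h v v = 1} ≃
      {w : (W ⊓ (h e).ker : Submodule F V) // h w.1 w.1 = 1} :=
    (Equiv.subtypeSubtypeEquivSubtypeInter _ _).symm
  rw [Nat.card_congr E2, Nat.card_eq_fintype_card, Fintype.card_subtype, Finset.card_filter,
    Finset.mul_sum, ← Finset.sum_add_distrib, Nat.card_eq_fintype_card, ← Finset.card_univ, mul_comm,
    ← smul_eq_mul, ← Finset.sum_const]
  apply Finset.sum_congr rfl
  intro w _
  by_cases hw : h w.1 w.1 = 1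
  · simp only [hw, sub_self, if_true]
    rw [card_norm_zero]; ring
  · rw [if_neg hw, card_norm hq hcard _ (sub_ne_zero.2 (Ne.symm hw))]
    · ring
    · have h6 := frob hq hcard (1 - h w.1 w.1) (h w.1 w.1)
      rw [sub_add_cancel, one_pow, ← hc] at h6
      exact eq_sub_of_add_eq h6.symm

/-- number of unit vectors -/
def N (q m : ℕ) : ℚ := (q : ℚ) ^ m * ((q : ℚ) ^ m - (-1) ^ m) / q

lemma card_unit (hq : IsPrimePow q) (hcard : Fintype.card F = q ^ 2)
    (hc : ∀ x y, h x y = (h y x) ^ q) (m : ℕ) : ∀ (W : Submodule F V), ND h W → finrank F W = m →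
    (Nat.card {v : V // v ∈ W ∧ h v v = 1} : ℚ) = N q m := by
  have h1 : 1 < q := hq.one_lt
  have hq0 : (q : ℚ) ≠ 0 := by positivity
  have : Module.Finite F V := Module.Finite.of_finite
  induction m with
  | zero =>
    intro W _ hf
    rw [Submodule.finrank_eq_zero] at hf
    subst hf
    have : IsEmpty {v : V // v ∈ (⊥ : Submodule F V) ∧ h v v = 1} := by
      refine ⟨fun v => ?_⟩
      have h2 := v.2.2
      rw [(Submodule.mem_bot F).1 v.2.1] at h2
      simp at h2
    rw [Nat.card_of_isEmpty]
    simp [N]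
  | succ m ih =>
    intro W hW hf
    obtain ⟨e, he, hee⟩ := exists_unit hq hcard hc W hW (by
      rintro rfl
      simp at hf)
    have h2 := finrank_perp W e he hee
    have h3 := ih _ (nd_perp hq hcard hc W hW e he hee) (by omega)
    have h4 := unit_rec hq hcard hc W e he hee
    have h5 : Nat.card (W ⊓ (h e).ker : Submodule F V) = (q ^ 2) ^ m := by
      rw [Module.natCard_eq_pow_finrank (K := F), Nat.card_eq_fintype_card, hcard]
      congr 1; omega
    rw [h5] at h4
    have h6 := congrArg (Nat.cast : ℕ → ℚ) h4
    push_cast at h6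
    rw [h3] at h6
    rw [eq_sub_of_add_eq h6]
    unfold N
    field_simp
    ring

/-- orthonormal tuples in W -/
def ON (h : V → V →ₗ[F] F) (r : ℕ) (W : Submodule F V) : Set (Fin r → V) :=
  {t | (∀ i, t i ∈ W) ∧ ∀ i j, h (t i) (t j) = if i = j then 1 else 0}

lemma card_ON (hq : IsPrimePow q) (hcard : Fintype.card F = q ^ 2)
    (hc : ∀ x y, h x y = (h y x) ^ q) (r : ℕ) : ∀ (m : ℕ) (W : Submodule F V), ND h W →
    finrank F W = m →
    (Nat.card (ON h r W) : ℚ) = ∏ i ∈ Finset.range r, N q (m - i) := by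
  have h1 : 1 < q := hq.one_lt
  induction r with
  | zero =>
    intro m W _ _
    have : Unique (ON h 0 W) := ⟨⟨⟨Fin.elim0, fun i => i.elim0, fun i => i.elim0⟩⟩,
      fun a => Subtype.ext (Subsingleton.elim _ _)⟩
    rw [Nat.card_unique]
    simp
  | succ r ih =>
    intro m W hW hf
    have E : ON h (r + 1) W ≃ Σ e : {v : V // v ∈ W ∧ h v v = 1}, ON h r (W ⊓ (h e.1).ker) := by
      refine ⟨fun t => ⟨⟨t.1 0, t.2.1 0, by simpa using t.2.2 0 0⟩, ⟨fun i => t.1 i.succ,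
        fun i => ⟨t.2.1 _, ?_⟩, fun i j => ?_⟩⟩, fun p => ⟨Fin.cons p.1.1 p.2.1, ?_, ?_⟩, ?_, ?_⟩
      · have := t.2.2 0 i.succ
        rw [if_neg (Fin.succ_ne_zero i).symm] at this
        exact this
      · have := t.2.2 i.succ j.succ
        simpa using this
      · intro i
        refine Fin.cases ?_ (fun i => ?_) i
        · exact p.1.2.1
        · exact (p.2.2.1 i).1
      · have hp : ∀ i, h p.1.1 (p.2.1 i) = 0 := fun i => (p.2.2.1 i).2
        intro i j
        refine Fin.cases ?_ (fun i => ?_) i <;> refine Fin.cases ?_ (fun j => ?_) j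
        · simpa using p.1.2.2
        · simpa [(Fin.succ_ne_zero j).symm] using hp j
        · rw [hc]
          simp only [Fin.cons_zero, Fin.cons_succ, hp, if_neg (Fin.succ_ne_zero i)]
          exact zero_pow (by omega)
        · simpa using p.2.2.2 i j
      · intro t
        apply Subtype.ext
        exact Fin.cons_self_tail t.1
      · rintro ⟨⟨e, he⟩, ⟨t, ht⟩⟩
        rfl
    have : Fintype {v : V // v ∈ W ∧ h v v = 1} := Fintype.ofFinite _
    rw [Nat.card_congr E, Nat.card_sigma, Nat.cast_sum,
      Finset.sum_congr rfl (fun e _ => ih (m - 1) _ (nd_perp hq hcard hc W hW e.1 e.2.1 e.2.2)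
        (by have := finrank_perp W e.1 e.2.1 e.2.2; omega)),
      Finset.sum_const, Finset.card_univ, ← Nat.card_eq_fintype_card, nsmul_eq_mul,
      card_unit hq hcard hc m W hW hf, Finset.prod_range_succ', mul_comm]
    congr 1
    apply Finset.prod_congr rfl
    intro i _
    congr 1; omega

lemma ON_indep {r : ℕ} {W : Submodule F V} {t : Fin r → V} (ht : t ∈ ON h r W) :
    LinearIndependent F t := by
  rw [Fintype.linearIndependent_iff]
  intro g hg i
  have := congrArg (h (t i)) hg
  simpa [ht.2] using this

lemma ON_nd {r : ℕ} {W : Submodule F V} {t : Fin r → V} (ht : t ∈ ON h r W) :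
    ND h (Submodule.span F (Set.range t)) := by
  intro x hx H
  obtain ⟨g, rfl⟩ := (Submodule.mem_span_range_iff_exists_fun F).1 hx
  apply Finset.sum_eq_zero
  intro i _
  have := H (t i) (Submodule.subset_span ⟨i, rfl⟩)
  simp [ht.2] at this
  simp [this]

lemma double_count (hq : IsPrimePow q) (hcard : Fintype.card F = q ^ 2)
    (hc : ∀ x y, h x y = (h y x) ^ q) (r n : ℕ) (hn : finrank F V = n) (hnd : ND h ⊤) :
    (Nat.card {C : Submodule F V // finrank F C = r ∧ ND h C} : ℚ) *
      ∏ i ∈ Finset.range r, N q (r - i) = ∏ i ∈ Finset.range r, N q (n - i) := by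
  have : Module.Finite F V := Module.Finite.of_finite
  have E : ON h r (⊤ : Submodule F V) ≃
      Σ C : {C : Submodule F V // finrank F C = r ∧ ND h C}, ON h r C.1 := by
    refine ⟨fun t => ⟨⟨Submodule.span F (Set.range t.1), ?_, ON_nd t.2⟩, ⟨t.1, ?_, t.2.2⟩⟩,
      fun p => ⟨p.2.1, fun _ => trivial, p.2.2.2⟩, ?_, ?_⟩
    · rw [finrank_span_eq_card (ON_indep t.2), Fintype.card_fin]
    · exact fun i => Submodule.subset_span ⟨i, rfl⟩
    · intro t; rfl
    · rintro ⟨⟨C, hC, hC'⟩, ⟨t, ht⟩⟩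
      have : Submodule.span F (Set.range t) = C := by
        apply Submodule.eq_of_le_of_finrank_eq
        · rw [Submodule.span_le]
          rintro _ ⟨i, rfl⟩
          exact ht.1 i
        · rw [finrank_span_eq_card (ON_indep ht), Fintype.card_fin, hC]
      subst this
      rfl
  have : Fintype {C : Submodule F V // finrank F C = r ∧ ND h C} := Fintype.ofFinite _
  rw [← card_ON hq hcard hc r n ⊤ hnd (by rw [finrank_top, hn]), Nat.card_congr E, Nat.card_sigma,
    Nat.cast_sum, Finset.sum_congr rfl (fun C _ => card_ON hq hcard hc r r C.1 C.2.2 C.2.1),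
    Finset.sum_const, Finset.card_univ, ← Nat.card_eq_fintype_card, nsmul_eq_mul]

end forms

end HLCD

open HLCD in
/-- The number of Hermitian LCD codes of length `n` and dimension `r` (with
`1 ≤ r ≤ n-1`) over the field of order `q₁²` equals
`q₁^{r(n-r)} · ∏_{i=0}^{r-1} (q₁^{n-i} - (-1)^{n-i})/(q₁^{r-i} - (-1)^{r-i})`. -/
theorem stmt7 {F : Type*} [Field F] [Fintype F] (q₁ n r : ℕ)
    (hq : IsPrimePow q₁) (hcard : Fintype.card F = q₁ ^ 2)
    (hn : 1 ≤ n) (hr : 1 ≤ r) (hrn : r ≤ n - 1) :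
    (Nat.card {C : Submodule F (Fin n → F) //
        Module.finrank F C = r ∧
        (C : Set (Fin n → F)) ∩ {x | ∀ c ∈ C, ∑ i, x i * (c i) ^ q₁ = 0} = {0}} : ℚ) =
      (q₁ : ℚ) ^ (r * (n - r)) *
        ∏ i ∈ Finset.range r,
          ((q₁ : ℚ) ^ (n - i) - (-1 : ℚ) ^ (n - i)) /
            ((q₁ : ℚ) ^ (r - i) - (-1 : ℚ) ^ (r - i)) := by
  have h1 : 1 < q₁ := hq.one_lt
  let h : (Fin n → F) → (Fin n → F) →ₗ[F] F := fun y =>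
    { toFun := fun x => ∑ i, x i * (y i) ^ q₁
      map_add' := fun a b => by simp [add_mul, Finset.sum_add_distrib]
      map_smul' := fun a b => by simp [Finset.mul_sum, mul_assoc] }
  have hdef : ∀ y x, h y x = ∑ i, x i * (y i) ^ q₁ := fun _ _ => rfl
  have hsum : ∀ f : Fin n → F, (∑ i, f i) ^ q₁ = ∑ i, (f i) ^ q₁ := by
    intro f
    let φ : F →+ F := ⟨⟨fun x => x ^ q₁, zero_pow (by omega)⟩, frob hq hcard⟩
    exact map_sum φ f Finset.univ
  have hc : ∀ x y, h x y = (h y x) ^ q₁ := by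
    intro x y
    rw [hdef, hdef, hsum]
    apply Finset.sum_congr rfl
    intro i _
    rw [mul_pow, frob2 hcard, mul_comm]
  have hnd : ND h ⊤ := by
    intro x _ H
    ext i
    have := H (Pi.single i 1) trivial
    rw [hdef, Finset.sum_eq_single i] at this
    · simpa using this
    · intro j _ hj
      simp [hj, show q₁ ≠ 0 by omega]
    · simp
  have hset : ∀ C : Submodule F (Fin n → F),
      ((C : Set (Fin n → F)) ∩ {x | ∀ c ∈ C, ∑ i, x i * (c i) ^ q₁ = 0} = {0}) ↔ ND h C := by
    intro C
    constructor
    · intro H x hx hxy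
      have : x ∈ (C : Set (Fin n → F)) ∩ {x | ∀ c ∈ C, ∑ i, x i * (c i) ^ q₁ = 0} := ⟨hx, hxy⟩
      rw [H] at this
      exact this
    · intro H
      ext x
      constructor
      · rintro ⟨hx, hxy⟩
        exact H x hx hxy
      · rintro rfl
        exact ⟨C.zero_mem, fun c _ => by simp⟩
  simp only [hset]
  have key := double_count hq hcard hc r n (by simp) hnd
  have hQ : (1 : ℚ) < q₁ := by exact_mod_cast h1
  have hne : ∀ m : ℕ, 0 < m → (q₁ : ℚ) ^ m - (-1) ^ m ≠ 0 := by
    intro m hm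
    have h2 : (1 : ℚ) < (q₁ : ℚ) ^ m := one_lt_pow₀ hQ (by omega)
    rcases neg_one_pow_eq_or ℚ m with h3 | h3 <;> rw [h3] <;> linarith
  have hN : ∀ m : ℕ, 0 < m → N q₁ m ≠ 0 := by
    intro m hm
    unfold N
    have := hne m hm
    have : (q₁ : ℚ) ≠ 0 := by positivity
    positivity
  have hprod : ∏ i ∈ Finset.range r, N q₁ (r - i) ≠ 0 :=
    Finset.prod_ne_zero_iff.2 fun i hi => hN _ (by have := Finset.mem_range.1 hi; omega)
  rw [eq_div_of_mul_eq hprod key, ← Finset.prod_div_distrib, mul_comm r, pow_mul]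
  rw [show ((q₁ : ℚ) ^ (n - r)) ^ r = ∏ i ∈ Finset.range r, (q₁ : ℚ) ^ (n - r) by simp,
    ← Finset.prod_mul_distrib]
  apply Finset.prod_congr rfl
  intro i hi
  have hi' := Finset.mem_range.1 hi
  have h5 := hne (r - i) (by omega)
  have h6 : (q₁ : ℚ) ≠ 0 := by positivity
  unfold N
  have h7 : (q₁ : ℚ) ^ (n - i) = (q₁ : ℚ) ^ (n - r) * (q₁ : ℚ) ^ (r - i) := by
    rw [← pow_add]; congr 1; omega
  set A := (q₁ : ℚ) ^ (n - i) - (-1) ^ (n - i)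
  set B := (q₁ : ℚ) ^ (r - i) - (-1) ^ (r - i)
  rw [h7]
  field_simp
end

section
/- Let q be an odd prime power and let n, r be even integers with 1 ≤ r ≤ n−1. The number of distinct Euclidean LCD codes of length n and dimension r over F_q equals q^{r(n−r)/2} multiplied by the Gaussian binomial coefficient [n/2 choose r/2]_{q²}. -/
/-- The Gaussian binomial coefficient `[m choose j]_Q` as a rational number. -/
noncomputable def gaussBinom (Q m j : ℕ) : ℚ :=
  ∏ i ∈ Finset.range j, ((Q : ℚ) ^ (m - i) - 1) / ((Q : ℚ) ^ (j - i) - 1)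

namespace LCD

section gauss
set_option linter.unusedSectionVars false
variable {F : Type*} [Field F] [Fintype F] [DecidableEq F]

lemma exists_char (F : Type*) [Field F] [Fintype F] :
    ∃ ψ : AddChar F ℂ, ψ.IsPrimitive := by
  obtain ⟨ψ, hψ⟩ : ∃ ψ : AddChar F ℂ, ψ 1 ≠ 1 :=
    AddChar.exists_apply_ne_zero.2 one_ne_zero
  refine ⟨ψ, AddChar.IsPrimitive.of_ne_one fun h => hψ (by simp [h])⟩

lemma sum_sq_eq (hF : ringChar F ≠ 2) (f : F → ℂ) :
    ∑ x : F, f (x ^ 2) = ∑ c : F, ((quadraticChar F c : ℂ) + 1) * f c := by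
  rw [← Finset.sum_fiberwise (s := Finset.univ) (g := fun x : F => x ^ 2)]
  refine Finset.sum_congr rfl fun c _ => ?_
  have h := quadraticChar_card_sqrts hF c
  have h2 : ((Finset.univ.filter fun x : F => x ^ 2 = c).card : ℂ)
      = (quadraticChar F c : ℂ) + 1 := by
    have : (Finset.univ.filter fun x : F => x ^ 2 = c) = {x : F | x ^ 2 = c}.toFinset := by
      ext x; simp
    rw [this]; exact_mod_cast h
  rw [← h2, Finset.sum_congr rfl (g := fun _ => f c)]
  · simp
  · intro x hx
    simp at hx
    rw [hx]

lemma char_sum {ι : Type*} (ψ : AddChar F ℂ) (s : Finset ι) (f : ι → F) :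
    ψ (∑ i ∈ s, f i) = ∏ i ∈ s, ψ (f i) := by
  classical
  induction s using Finset.induction_on with
  | empty => simp
  | insert a s ha ih => rw [Finset.sum_insert ha, Finset.prod_insert ha, AddChar.map_add_eq_mul, ih]

lemma gauss_neg (hF : ringChar F ≠ 2) {ψ : AddChar F ℂ} (hψ : ψ.IsPrimitive)
    {ν : F} (hν : ¬ IsSquare ν) {a : F} (ha : a ≠ 0) :
    ∑ x : F, ψ (ν * a * x ^ 2) = - ∑ x : F, ψ (a * x ^ 2) := by
  have hν0 : ν ≠ 0 := by rintro rfl; exact hν (IsSquare.zero)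
  have key : ∀ b : F, b ≠ 0 →
      ∑ x : F, ψ (b * x ^ 2) = ∑ c : F, (quadraticChar F c : ℂ) * ψ (b * c) := by
    intro b hb
    rw [sum_sq_eq hF (fun c => ψ (b * c))]
    simp_rw [add_mul, one_mul]
    rw [Finset.sum_add_distrib]
    have := AddChar.sum_mulShift b hψ
    simp_rw [mul_comm b] 
    rw [this, if_neg hb]; simp
  rw [key _ ha, key _ (mul_ne_zero hν0 ha),
    ← Equiv.sum_comp (Equiv.mulLeft₀ ν hν0) (fun c => (quadraticChar F c : ℂ) * ψ (a * c)),
    ← Finset.sum_neg_distrib]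
  refine Finset.sum_congr rfl fun c _ => ?_
  have : quadraticChar F ν = -1 := quadraticChar_neg_one_iff_not_isSquare.mpr hν
  have e : a * (ν * c) = ν * a * c := by ring
  change _ = -((quadraticChar F (ν * c) : ℂ) * ψ (a * (ν * c)))
  rw [map_mul (quadraticChar F), this, e]
  push_cast
  ring

lemma zeros_diag (hF : ringChar F ≠ 2) {m : ℕ} (hm : Odd m) (w : Fin m → F)
    (hw : ∀ i, w i ≠ 0) :
    Fintype.card {v : Fin m → F // ∑ i, w i * v i ^ 2 = 0} = Fintype.card F ^ (m - 1) := by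
  obtain ⟨ψ, hψ⟩ := exists_char F
  obtain ⟨ν, hν⟩ := FiniteField.exists_nonsquare hF
  have hν0 : ν ≠ 0 := by rintro rfl; exact hν (IsSquare.zero)
  let S : F → ℂ := fun t => ∑ v : Fin m → F, ψ (t * ∑ i, w i * v i ^ 2)
  have hS : ∀ t, S t = ∏ i, ∑ x : F, ψ (t * w i * x ^ 2) := by
    intro t
    rw [Finset.prod_univ_sum, Fintype.piFinset_univ]
    refine Finset.sum_congr rfl fun v _ => ?_
    rw [Finset.mul_sum, char_sum]
    simp_rw [mul_assoc]
  have hSν : ∀ t, t ≠ 0 → S (ν * t) = - S t := by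
    intro t ht
    rw [hS, hS]
    rw [Finset.prod_congr rfl (g := fun i => - ∑ x : F, ψ (t * w i * x ^ 2))]
    · rw [Finset.prod_neg]; simp [hm.neg_one_pow]
    · intro i _
      rw [mul_assoc ν, gauss_neg hF hψ hν (mul_ne_zero ht (hw i))]
  have hS0 : S 0 = (Fintype.card F : ℂ) ^ m := by simp [S]
  have h1 : ∑ t, S t = S 0 + ∑ t ∈ Finset.univ.erase 0, S t := by
    rw [Finset.add_sum_erase _ _ (Finset.mem_univ _)]
  have h2 : ∑ t, S t = S 0 + ∑ t ∈ Finset.univ.erase 0, S (ν * t) := by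
    rw [← Equiv.sum_comp (Equiv.mulLeft₀ ν hν0), ← Finset.add_sum_erase _ _ (Finset.mem_univ 0)]
    simp
  rw [Finset.sum_congr rfl (fun t ht => hSν t (Finset.ne_of_mem_erase ht)),
    Finset.sum_neg_distrib] at h2
  have h3 : ∑ t, S t = (Fintype.card F : ℂ) ^ m := by
    rw [← hS0]; linear_combination (h1 + h2) / 2
  have h4 : ∑ t, S t = Fintype.card {v : Fin m → F // ∑ i, w i * v i ^ 2 = 0} *
      (Fintype.card F : ℂ) := by
    simp only [S]
    rw [Finset.sum_comm]
    simp_rw [AddChar.sum_mulShift _ hψ]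
    rw [Fintype.card_subtype]
    push_cast
    rw [← Finset.sum_filter]
    simp
  rw [h3] at h4
  obtain ⟨k, rfl⟩ := hm
  have hc : (Fintype.card F) ≠ 0 := Fintype.card_ne_zero
  have h5 : Fintype.card F ^ (2 * k + 1) =
    Fintype.card {v : Fin (2 * k + 1) → F // ∑ i, w i * v i ^ 2 = 0} * Fintype.card F := by
    exact_mod_cast h4
  rw [pow_succ] at h5
  simpa using (Nat.eq_of_mul_eq_mul_right (Nat.pos_of_ne_zero hc) h5).symm

end gauss

set_option linter.unusedSectionVars false
variable {F : Type*} [Field F] [Fintype F] {V : Type*} [AddCommGroup V] [Module F V]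
  [FiniteDimensional F V]

/-- nondegenerate subspace -/
def ND (B : LinearMap.BilinForm F V) (C : Submodule F V) : Prop :=
  ∀ x ∈ C, (∀ c ∈ C, B x c = 0) → x = 0

lemma zeros_odd (hF : ringChar F ≠ 2) (B : LinearMap.BilinForm F V) (hs : ∀ x y, B x y = B y x)
    (U : Submodule F V) (hU : ND B U) (hm : Odd (Module.finrank F U)) :
    Nat.card {x : U // B x x = 0} = Fintype.card F ^ (Module.finrank F U - 1) := by
  classical
  have h2 : (2 : F) ≠ 0 := Ring.two_ne_zero hF
  have : Invertible (2 : F) := invertibleOfNonzero h2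
  obtain ⟨v, hv⟩ := LinearMap.BilinForm.exists_orthogonal_basis (K := F) (V := U)
    (B := B.restrict U) ⟨fun x y => hs _ _⟩
  have hsep : (B.restrict U).SeparatingLeft := by
    intro x hx
    have := hU x x.2 (fun c hc => hx ⟨c, hc⟩)
    exact Subtype.ext this
  have hw := hv.not_isOrtho_basis_self_of_separatingLeft hsep
  rw [← zeros_diag hF hm (fun i => B (v i) (v i)) hw, ← Nat.card_eq_fintype_card]
  refine Nat.card_congr (Equiv.subtypeEquiv v.equivFun.toEquiv fun x => ?_)
  have : B x x = ∑ i, B (v i) (v i) * v.equivFun x i ^ 2 := by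
    have hx : (x : V) = ∑ i, v.equivFun x i • (v i : V) := by
      have h := congrArg (Subtype.val) (v.sum_equivFun x)
      rw [← h]
      push_cast
      simp
    conv_lhs => rw [hx]
    simp only [map_sum, LinearMap.sum_apply, map_smul, LinearMap.smul_apply, smul_eq_mul]
    refine Finset.sum_congr rfl fun i _ => ?_
    rw [Finset.sum_eq_single i]
    · ring
    · intro j _ hj
      have h' : B (v j) (v i) = 0 := hv hj
      simp [h']
    · simp
  rw [this]; rfl

section sub
variable (B : LinearMap.BilinForm F V) (hs : ∀ x y, B x y = B y x)

lemma nd_isCompl (hs : ∀ x y, B x y = B y x) {W : Submodule F V} (hW : ND B W) :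
    IsCompl W (B.orthogonal W) := by
  refine LinearMap.BilinForm.isCompl_orthogonal_of_restrict_nondegenerate
    (fun x y h => by rw [hs]; exact h) ⟨?_, ?_⟩
  · intro x hx
    exact Subtype.ext (hW x x.2 (fun c hc => hx ⟨c, hc⟩))
  · intro x hx
    exact Subtype.ext (hW x x.2 (fun c hc => by rw [hs]; exact hx ⟨c, hc⟩))

lemma sup_perp (hs : ∀ x y, B x y = B y x) {W U : Submodule F V} (hW : ND B W) (h : W ≤ U) :
    W ⊔ (B.orthogonal W ⊓ U) = U := by
  rw [← sup_inf_assoc_of_le _ h, (nd_isCompl B hs hW).sup_eq_top, top_inf_eq]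

lemma finrank_sup_orth (hs : ∀ x y, B x y = B y x) {W D : Submodule F V} (hW : ND B W)
    (h : D ≤ B.orthogonal W) :
    Module.finrank F ↥(W ⊔ D) = Module.finrank F W + Module.finrank F D := by
  rw [← Submodule.finrank_sup_add_finrank_inf_eq]
  have : W ⊓ D = ⊥ := by
    rw [eq_bot_iff, ← (nd_isCompl B hs hW).inf_eq_bot]
    exact inf_le_inf_left _ h
  rw [this]; simp

lemma nd_sup_iff (hs : ∀ x y, B x y = B y x) {W D : Submodule F V} (hW : ND B W)
    (h : D ≤ B.orthogonal W) : ND B (W ⊔ D) ↔ ND B D := by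
  have ho : ∀ w ∈ W, ∀ d ∈ D, B w d = 0 := fun w hw d hd =>
    LinearMap.BilinForm.mem_orthogonal_iff.1 (h hd) w hw
  constructor
  · intro H d hd hdd
    refine H d (Submodule.mem_sup_right hd) fun c hc => ?_
    obtain ⟨w, hw, d', hd', rfl⟩ := Submodule.mem_sup.1 hc
    rw [map_add, hdd d' hd', hs, ho w hw d hd, add_zero]
  · intro H x hx hxx
    obtain ⟨w, hw, d, hd, rfl⟩ := Submodule.mem_sup.1 hx
    have h1 : w = 0 := hW w hw fun c hc => by
      have := hxx c (Submodule.mem_sup_left hc)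
      rwa [map_add, LinearMap.add_apply, hs d, ho c hc d hd, add_zero] at this
    have h2 : d = 0 := H d hd fun c hc => by
      have := hxx c (Submodule.mem_sup_right hc)
      rwa [map_add, LinearMap.add_apply, ho w hw c hc, zero_add] at this
    rw [h1, h2, add_zero]

lemma nd_perp (hs : ∀ x y, B x y = B y x) {W U : Submodule F V} (hW : ND B W) (hU : ND B U)
    (h : W ≤ U) : ND B (B.orthogonal W ⊓ U) := by
  rw [← nd_sup_iff B hs hW inf_le_left, sup_perp B hs hW h]; exact hU

lemma finrank_perp (hs : ∀ x y, B x y = B y x) {W U : Submodule F V} (hW : ND B W)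
    (h : W ≤ U) : Module.finrank F W + Module.finrank F ↥(B.orthogonal W ⊓ U) =
      Module.finrank F U := by
  rw [← finrank_sup_orth B hs hW inf_le_left, sup_perp B hs hW h]

lemma nd_span_singleton {x : V} (hx : B x x ≠ 0) : ND B (Submodule.span F {x}) := by
  intro y hy h
  obtain ⟨c, rfl⟩ := Submodule.mem_span_singleton.1 hy
  have := h x (Submodule.mem_span_singleton_self x)
  simp [hx] at this
  simp [this]

lemma bad_iso {U : Submodule F V} (hU : ND B U) {x : V} (hxU : x ∈ U) (hx0 : x ≠ 0)
    (hx : B x x = 0) :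
    Nat.card {y : U // B x x * B y y - B x y ^ 2 = 0} =
      Fintype.card F ^ (Module.finrank F U - 1) := by
  let f : U →ₗ[F] F := (B x).comp U.subtype
  have hf : f ≠ 0 := by
    intro h
    refine hx0 (hU x hxU fun c hc => ?_)
    exact LinearMap.congr_fun h ⟨c, hc⟩
  have h1 := LinearMap.finrank_range_add_finrank_ker f
  rw [LinearMap.range_eq_top.2 (LinearMap.surjective hf)] at h1
  have h2 : Module.finrank F (LinearMap.ker f) = Module.finrank F U - 1 := by
    simp at h1; omega
  rw [← h2, ← Nat.card_eq_fintype_card, ← Module.natCard_eq_pow_finrank]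
  refine Nat.card_congr (Equiv.subtypeEquivRight fun y => ?_)
  simp [hx, f]

lemma bad_aniso (hF : ringChar F ≠ 2) (hs : ∀ x y, B x y = B y x)
    {U : Submodule F V} (hU : ND B U) {x : V} (hxU : x ∈ U)
    (hx : B x x ≠ 0) (he : Even (Module.finrank F U)) :
    Nat.card {y : U // B x x * B y y - B x y ^ 2 = 0} =
      Fintype.card F ^ (Module.finrank F U - 1) := by
  have hW := nd_span_singleton B hx
  have hle : Submodule.span F {x} ≤ U := by simpa using hxU
  have hx0 : x ≠ 0 := by rintro rfl; simp at hx
  have hD := nd_perp B hs hW hU hle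
  have hd := finrank_perp B hs hW hle
  rw [finrank_span_singleton hx0] at hd
  have hodd : Odd (Module.finrank F ↥(B.orthogonal (Submodule.span F {x}) ⊓ U)) := by
    rw [← hd] at he
    rcases Nat.even_or_odd (Module.finrank F ↥(B.orthogonal (Submodule.span F {x}) ⊓ U)) with h | h
    · exact absurd he (by simp [Nat.even_add, h])
    · exact h
  have hz := zeros_odd hF B hs _ hD hodd
  have hm : ∀ z, z ∈ (B.orthogonal (Submodule.span F {x}) ⊓ U) ↔ B x z = 0 ∧ z ∈ U := by
    intro z
    rw [Submodule.mem_inf, LinearMap.BilinForm.mem_orthogonal_iff]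
    refine and_congr_left fun _ => ⟨fun h => h x (Submodule.mem_span_singleton_self x), ?_⟩
    intro h n hn
    obtain ⟨c, rfl⟩ := Submodule.mem_span_singleton.1 hn
    simp [h]
  let D := B.orthogonal (Submodule.span F {x}) ⊓ U
  let e : {y : U // B x x * B y y - B x y ^ 2 = 0} ≃ F × {z : D // B z z = 0} :=
    { toFun := fun y => (B x y / B x x, ⟨⟨y.1 - (B x y / B x x) • x, (hm _).2 ⟨by
          simp [hx], U.sub_mem y.1.2 (U.smul_mem _ hxU)⟩⟩, by
          have h := y.2
          simp [hs y.1 x]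
          field_simp
          linear_combination h⟩)
      invFun := fun p => ⟨⟨p.1 • x + p.2.1.1, U.add_mem (U.smul_mem _ hxU) ((hm _).1 p.2.1.2).2⟩, by
          have h1 := ((hm _).1 p.2.1.2).1
          have h2 := p.2.2
          simp [h1, h2, hs _ x]
          ring⟩
      left_inv := fun y => by ext; simp
      right_inv := fun p => by
          have h1 := ((hm _).1 p.2.1.2).1
          ext <;> simp [h1, hx] }
  rw [Nat.card_congr e, Nat.card_prod, hz, Nat.card_eq_fintype_card, ← pow_succ']
  congr 1
  have := hodd.pos
  omega

open Classical in
noncomputable def goodPairs [Fintype V] (U : Submodule F V) : Finset (V × V) :=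
  Finset.univ.filter fun p => p.1 ∈ U ∧ p.2 ∈ U ∧ B p.1 p.1 * B p.2 p.2 - B p.1 p.2 ^ 2 ≠ 0

lemma card_good_row (hF : ringChar F ≠ 2) (hs : ∀ x y, B x y = B y x)
    {U : Submodule F V} (hU : ND B U) {x : V} (hxU : x ∈ U) (hx0 : x ≠ 0)
    (he : Even (Module.finrank F U)) :
    Nat.card {y : U // B x x * B y y - B x y ^ 2 ≠ 0} =
      Fintype.card F ^ (Module.finrank F U) - Fintype.card F ^ (Module.finrank F U - 1) := by
  classical
  have : Finite U := Module.finite_of_finite F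
  have := Fintype.ofFinite U
  have hbad : Nat.card {y : U // B x x * B y y - B x y ^ 2 = 0} =
      Fintype.card F ^ (Module.finrank F U - 1) := by
    by_cases hx : B x x = 0
    · exact bad_iso B hU hxU hx0 hx
    · exact bad_aniso B hF hs hU hxU hx he
  rw [← hbad, ← Nat.card_eq_fintype_card (α := F), ← Module.natCard_eq_pow_finrank]
  simp only [Nat.card_eq_fintype_card]
  rw [← Fintype.card_subtype_compl]

lemma card_goodPairs [Fintype V] (hF : ringChar F ≠ 2) (hs : ∀ x y, B x y = B y x)
    {U : Submodule F V} (hU : ND B U) (he : Even (Module.finrank F U)) :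
    (goodPairs B U).card = (Fintype.card F ^ (Module.finrank F U) - 1) *
      (Fintype.card F ^ (Module.finrank F U) - Fintype.card F ^ (Module.finrank F U - 1)) := by
  classical
  set R := Fintype.card F ^ (Module.finrank F U) - Fintype.card F ^ (Module.finrank F U - 1)
  have hrow : ∀ x : V, (∑ y : V, if (x ∈ U ∧ y ∈ U ∧ B x x * B y y - B x y ^ 2 ≠ 0) then 1 else 0)
      = if (x ∈ U ∧ x ≠ 0) then R else 0 := by
    intro x
    rw [← Finset.card_filter]
    split_ifs with h
    · rw [show R = _ from (card_good_row B hF hs hU h.1 h.2 he).symm, Nat.card_eq_fintype_card, Fintype.card_subtype,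
        ← Finset.card_map (Function.Embedding.subtype (· ∈ U))]
      congr 1
      ext y
      simp [h.1, and_comm]
    · rw [Finset.card_eq_zero, Finset.filter_eq_empty_iff]
      rintro y - ⟨h1, h2, h3⟩
      refine h ⟨h1, ?_⟩
      rintro rfl
      simp at h3
  unfold goodPairs
  rw [Finset.card_filter, ← Finset.univ_product_univ, Finset.sum_product]
  simp only
  rw [Finset.sum_congr rfl fun x _ => hrow x, ← Finset.sum_filter, Finset.sum_const, smul_eq_mul]
  congr 1
  rw [← Nat.card_eq_fintype_card (α := F), ← Module.natCard_eq_pow_finrank,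
    Nat.card_eq_fintype_card]
  have : (Finset.univ.filter fun x => x ∈ U ∧ x ≠ 0) =
      (Finset.univ.filter fun x => x ∈ U).erase 0 := by
    ext x; simp [and_comm]
  rw [this, Finset.card_erase_of_mem (by simp), Fintype.card_subtype]

open Classical in
noncomputable def LS [Fintype (Submodule F V)] (U : Submodule F V) (r : ℕ) :
    Finset (Submodule F V) :=
  Finset.univ.filter fun C => C ≤ U ∧ Module.finrank F C = r ∧ ND B C

lemma pair_span (hs : ∀ x y, B x y = B y x) {x y : V}
    (h : B x x * B y y - B x y ^ 2 ≠ 0) :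
    Module.finrank F ↥(Submodule.span F {x, y}) = 2 ∧ ND B (Submodule.span F {x, y}) := by
  have key : ∀ a b : F, B (a • x + b • y) x = 0 → B (a • x + b • y) y = 0 → a = 0 ∧ b = 0 := by
    intro a b h1 h2
    simp [hs y x] at h1 h2
    constructor
    · refine (mul_eq_zero.1 (?_ : a * (B x x * B y y - B x y ^ 2) = 0)).resolve_right h
      linear_combination B y y * h1 - B x y * h2
    · refine (mul_eq_zero.1 (?_ : b * (B x x * B y y - B x y ^ 2) = 0)).resolve_right h
      linear_combination B x x * h2 - B x y * h1
  constructor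
  · have hl : LinearIndependent F ![x, y] := LinearIndependent.pair_iff.2 fun a b hab =>
      key a b (by simp [hab]) (by simp [hab])
    have h2 := finrank_span_eq_card hl
    rw [Matrix.range_cons_cons_empty] at h2
    simpa using h2
  · intro z hz hc
    obtain ⟨a, b, rfl⟩ := Submodule.mem_span_pair.1 hz
    obtain ⟨rfl, rfl⟩ := key a b (hc x (Submodule.subset_span (by simp)))
      (hc y (Submodule.subset_span (by simp)))
    simp

lemma card_LS_two_mul [Fintype V] [Fintype (Submodule F V)] (hF : ringChar F ≠ 2)
    (hs : ∀ x y, B x y = B y x)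
    {U : Submodule F V} (hU : ND B U) (he : Even (Module.finrank F U)) :
    (Fintype.card F ^ (Module.finrank F U) - 1) *
      (Fintype.card F ^ (Module.finrank F U) - Fintype.card F ^ (Module.finrank F U - 1)) =
    (LS B U 2).card * ((Fintype.card F ^ 2 - 1) * (Fintype.card F ^ 2 - Fintype.card F)) := by
  classical
  rw [← card_goodPairs B hF hs hU he, ← mul_one (goodPairs B U).card]
  refine Finset.card_mul_eq_card_mul (fun p W => p.1 ∈ W ∧ p.2 ∈ W) ?_ ?_
  · rintro ⟨x, y⟩ hp
    simp only [goodPairs, Finset.mem_filter, Finset.mem_univ, true_and] at hp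
    obtain ⟨hx, hy, hg⟩ := hp
    obtain ⟨h1, h2⟩ := pair_span B hs hg
    rw [Finset.card_eq_one]
    refine ⟨Submodule.span F {x, y}, ?_⟩
    ext W
    simp only [Finset.bipartiteAbove, LS, Finset.mem_filter, Finset.mem_univ, true_and,
      Finset.mem_singleton]
    constructor
    · rintro ⟨⟨-, hW, -⟩, hxW, hyW⟩
      refine (Submodule.eq_of_le_of_finrank_eq ?_ (by rw [h1, hW])).symm
      rw [Submodule.span_le]
      rintro z (rfl | rfl) <;> assumption
    · rintro rfl
      refine ⟨⟨?_, h1, h2⟩, Submodule.subset_span (by simp), Submodule.subset_span (by simp)⟩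
      rw [Submodule.span_le]
      rintro z (rfl | rfl) <;> assumption
  · intro W hW
    simp only [LS, Finset.mem_filter, Finset.mem_univ, true_and] at hW
    obtain ⟨hWU, hW2, hWn⟩ := hW
    have := card_goodPairs B hF hs hWn (by rw [hW2]; decide)
    rw [hW2] at this
    simp only [Nat.add_one_sub_one, pow_one] at this
    rw [← this]
    congr 1
    ext ⟨x, y⟩
    simp only [Finset.bipartiteBelow, goodPairs, Finset.mem_filter, Finset.mem_univ, true_and]
    constructor
    · rintro ⟨⟨-, -, h⟩, h1, h2⟩; exact ⟨h1, h2, h⟩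
    · rintro ⟨h1, h2, h⟩; exact ⟨⟨hWU h1, hWU h2, h⟩, h1, h2⟩

lemma card_LS_two [Fintype V] [Fintype (Submodule F V)] (hF : ringChar F ≠ 2)
    (hs : ∀ x y, B x y = B y x)
    {U : Submodule F V} (hU : ND B U) {k : ℕ} (hk : Module.finrank F U = 2 * (k + 1)) :
    ((LS B U 2).card : ℚ) = (Fintype.card F : ℚ) ^ (2 * k) *
      (((Fintype.card F : ℚ) ^ 2) ^ (k + 1) - 1) / ((Fintype.card F : ℚ) ^ 2 - 1) := by
  have h := card_LS_two_mul B hF hs hU (by rw [hk]; simp)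
  have hq : 1 < Fintype.card F := Fintype.one_lt_card
  rw [hk] at h
  generalize Fintype.card F = q at *
  have e : 2 * (k + 1) - 1 = 2 * k + 1 := by omega
  rw [e] at h
  have h' := congrArg (Nat.cast : ℕ → ℚ) h
  rw [Nat.cast_mul, Nat.cast_mul, Nat.cast_mul, Nat.cast_sub (Nat.one_le_pow _ _ (by omega)),
    Nat.cast_sub (Nat.pow_le_pow_right (by omega) (by omega)),
    Nat.cast_sub (Nat.one_le_pow _ _ (by omega)), Nat.cast_sub (by nlinarith)] at h'
  push_cast at h'
  have hq' : (1 : ℚ) < q := by exact_mod_cast hq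
  have h1 : (q : ℚ) ^ 2 - 1 ≠ 0 := by nlinarith
  have h2 : (q : ℚ) * (q - 1) ≠ 0 := mul_ne_zero (by linarith) (by linarith)
  rw [eq_div_iff h1, ← pow_mul]
  apply mul_right_cancel₀ h2
  linear_combination -h'

lemma card_above (hs : ∀ x y, B x y = B y x) [Fintype (Submodule F V)] {U W : Submodule F V}
    (hW : ND B W) (hWU : W ≤ U) (r : ℕ) [DecidablePred fun C : Submodule F V => W ≤ C] :
    ((LS B U (Module.finrank F W + r)).filter fun C => W ≤ C).card =
      (LS B (B.orthogonal W ⊓ U) r).card := by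
  refine Finset.card_bij' (fun C _ => B.orthogonal W ⊓ C) (fun D _ => W ⊔ D) ?_ ?_ ?_ ?_
  · intro C hC
    simp only [LS, Finset.mem_filter, Finset.mem_univ, true_and] at hC ⊢
    obtain ⟨⟨h1, h2, h3⟩, h4⟩ := hC
    refine ⟨inf_le_inf_left _ h1, ?_, nd_perp B hs hW h3 h4⟩
    have := finrank_perp B hs hW h4
    omega
  · intro D hD
    simp only [LS, Finset.mem_filter, Finset.mem_univ, true_and] at hD ⊢
    obtain ⟨h1, h2, h3⟩ := hD
    have h4 := h1.trans inf_le_left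
    exact ⟨⟨sup_le hWU (h1.trans inf_le_right), by rw [finrank_sup_orth B hs hW h4, h2],
      (nd_sup_iff B hs hW h4).2 h3⟩, le_sup_left⟩
  · intro C hC
    simp only [LS, Finset.mem_filter, Finset.mem_univ, true_and] at hC
    exact sup_perp B hs hW hC.2
  · intro D hD
    simp only [LS, Finset.mem_filter, Finset.mem_univ, true_and] at hD
    have h4 := hD.1.trans inf_le_left
    have : D ⊔ W ⊓ B.orthogonal W = (D ⊔ W) ⊓ B.orthogonal W :=
      (sup_inf_assoc_of_le _ h4).symm
    rw [(nd_isCompl B hs hW).inf_eq_bot, sup_bot_eq] at this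
    change B.orthogonal W ⊓ (W ⊔ D) = D
    rw [inf_comm, sup_comm]
    exact this.symm

lemma main_count [Fintype V] [Fintype (Submodule F V)] (hF : ringChar F ≠ 2)
    (hs : ∀ x y, B x y = B y x) (a : ℕ) : ∀ (k : ℕ) (U : Submodule F V), ND B U → 
    Module.finrank F U = 2 * k → a ≤ k →
    ((LS B U (2 * a)).card : ℚ) = (Fintype.card F : ℚ) ^ (2 * a * (k - a)) *
      gaussBinom (Fintype.card F ^ 2) k a := by
  classical
  induction a with
  | zero =>
    intro k U hU hk _
    have : LS B U (2 * 0) = {⊥} := by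
      ext C
      simp only [LS, Finset.mem_filter, Finset.mem_univ, true_and, Finset.mem_singleton, mul_zero,
        Submodule.finrank_eq_zero]
      constructor
      · exact fun h => h.2.1
      · rintro rfl
        exact ⟨bot_le, rfl, fun x hx _ => by simpa using hx⟩
    rw [this]; simp [gaussBinom]
  | succ a ih =>
    intro k U hU hk hak
    obtain ⟨j, rfl⟩ : ∃ j, k = j + 1 := ⟨k - 1, by omega⟩
    have hd := Finset.sum_card_bipartiteAbove_eq_sum_card_bipartiteBelow
      (fun W C : Submodule F V => W ≤ C) (s := LS B U 2) (t := LS B U (2 * (a + 1)))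
    have hd' := congrArg (Nat.cast : ℕ → ℚ) hd
    rw [Nat.cast_sum, Nat.cast_sum] at hd'
    have hl : ∀ W ∈ LS B U 2, ((Finset.bipartiteAbove (fun W C : Submodule F V => W ≤ C)
        (LS B U (2 * (a + 1))) W).card : ℚ) = (Fintype.card F : ℚ) ^ (2 * a * (j - a)) *
      gaussBinom (Fintype.card F ^ 2) j a := by
      intro W hW
      simp only [LS, Finset.mem_filter, Finset.mem_univ, true_and] at hW
      obtain ⟨h1, h2, h3⟩ := hW
      have h4 := finrank_perp B hs h3 h1
      have h5 := card_above B hs h3 h1 (2 * a)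
      rw [← ih j _ (nd_perp B hs h3 hU h1) (by omega) (by omega), ← h5, h2]
      have e : 2 * (a + 1) = 2 + 2 * a := by ring
      rw [e]; rfl
    have hr : ∀ C ∈ LS B U (2 * (a + 1)), ((Finset.bipartiteBelow (fun W C : Submodule F V => W ≤ C)
        (LS B U 2) C).card : ℚ) = (Fintype.card F : ℚ) ^ (2 * a) *
      (((Fintype.card F : ℚ) ^ 2) ^ (a + 1) - 1) / ((Fintype.card F : ℚ) ^ 2 - 1) := by
      intro C hC
      simp only [LS, Finset.mem_filter, Finset.mem_univ, true_and] at hC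
      obtain ⟨h1, h2, h3⟩ := hC
      rw [← card_LS_two B hF hs h3 h2]
      congr 2
      ext W
      simp only [LS, Finset.bipartiteBelow, Finset.mem_filter, Finset.mem_univ, true_and]
      constructor
      · rintro ⟨⟨-, h⟩, h'⟩; exact ⟨h', h⟩
      · rintro ⟨h', h⟩; exact ⟨⟨h'.trans h1, h⟩, h'⟩
    rw [Finset.sum_congr rfl hl, Finset.sum_congr rfl hr, Finset.sum_const, Finset.sum_const,
      nsmul_eq_mul, nsmul_eq_mul, card_LS_two B hF hs hU hk] at hd'
    have hq : 1 < Fintype.card F := Fintype.one_lt_card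
    have hg : gaussBinom (Fintype.card F ^ 2) (j + 1) (a + 1) =
        gaussBinom (Fintype.card F ^ 2) j a * ((((Fintype.card F : ℚ) ^ 2) ^ (j + 1) - 1) /
          (((Fintype.card F : ℚ) ^ 2) ^ (a + 1) - 1)) := by
      unfold gaussBinom
      rw [Finset.prod_range_succ']
      simp
    rw [hg]
    obtain ⟨b, rfl⟩ : ∃ b, j = a + b := ⟨j - a, by omega⟩
    have e1 : a + b - a = b := by omega
    have e2 : a + b + 1 - (a + 1) = b := by omega
    rw [e1] at hd'
    rw [e2]
    generalize gaussBinom (Fintype.card F ^ 2) (a + b) a = G at *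
    generalize ((LS B U (2 * (a + 1))).card : ℚ) = X at *
    have hq' : (1 : ℚ) < Fintype.card F := by exact_mod_cast hq
    generalize (Fintype.card F : ℚ) = q at *
    have h1 : q ^ 2 - 1 ≠ 0 := by nlinarith
    have h2 : (q ^ 2) ^ (a + 1) - 1 ≠ 0 := by
      have : 1 < (q ^ 2) ^ (a + 1) := one_lt_pow₀ (by nlinarith) (by omega)
      linarith
    have h3 : q ^ (2 * a) ≠ 0 := pow_ne_zero _ (by linarith)
    generalize hA : (q ^ 2) ^ (a + 1) - 1 = A at *
    generalize hC : (q ^ 2) ^ (a + b + 1) - 1 = C at *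
    have e3 : q ^ (2 * (a + b)) = q ^ (2 * a) * q ^ (2 * b) := by rw [← pow_add]; ring_nf
    have e4 : q ^ (2 * (a + 1) * b) = q ^ (2 * a * b) * q ^ (2 * b) := by
      rw [← pow_add]; ring_nf
    rw [e3] at hd'
    rw [e4]
    field_simp at hd' ⊢
    linear_combination -hd'

end sub

end LCD

/-- For an odd prime power `q` and even integers `n, r` with `1 ≤ r ≤ n-1`, the number
of Euclidean LCD codes of length `n` and dimension `r` over `F_q` equals
`q^{r(n-r)/2} · [n/2 choose r/2]_{q²}`. -/
theorem stmt18 {F : Type*} [Field F] [Fintype F] (q n r : ℕ)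
    (hq : IsPrimePow q) (hodd : Odd q) (hcard : Fintype.card F = q)
    (hneven : Even n) (hreven : Even r) (hr : 1 ≤ r) (hrn : r ≤ n - 1) :
    (Nat.card {C : Submodule F (Fin n → F) //
        Module.finrank F C = r ∧
        (C : Set (Fin n → F)) ∩ {x | ∀ c ∈ C, ∑ i, x i * c i = 0} = {0}} : ℚ) =
      (q : ℚ) ^ ((r * (n - r)) / 2) * gaussBinom (q ^ 2) (n / 2) (r / 2) := by
  classical
  obtain ⟨k, rfl⟩ := hneven
  obtain ⟨a, rfl⟩ := hreven
  have hF : ringChar F ≠ 2 := by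
    intro h
    have := FiniteField.even_card_of_char_two h
    rw [hcard] at this
    rcases hodd with ⟨t, ht⟩
    omega
  have := Fintype.ofFinite (Submodule F (Fin (k + k) → F))
  let B : LinearMap.BilinForm F (Fin (k + k) → F) := dotProductBilin F F
  have hB : ∀ x y, B x y = ∑ i, x i * y i := fun x y => rfl
  have hs : ∀ x y, B x y = B y x := fun x y => by
    rw [hB, hB]; exact Finset.sum_congr rfl fun i _ => mul_comm _ _
  have hT : LCD.ND B ⊤ := by
    intro x _ h
    ext i
    have := h (Pi.single i 1) trivial
    rw [hB] at this
    simpa [Pi.single_apply] using this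
  have H := LCD.main_count B hF hs a k ⊤ hT (by simp; ring) (by omega)
  rw [← hcard]
  have e1 : (k + k) / 2 = k := by omega
  have e2 : (a + a) / 2 = a := by omega
  have e3 : (a + a) * (k + k - (a + a)) / 2 = 2 * a * (k - a) := by
    obtain ⟨b, rfl⟩ : ∃ b, k = a + b := ⟨k - a, by omega⟩
    have : a + b + (a + b) - (a + a) = 2 * b := by omega
    rw [this, Nat.add_sub_cancel_left]
    apply Nat.div_eq_of_eq_mul_left (by norm_num)
    ring
  rw [e1, e2, e3, ← H, Nat.card_eq_fintype_card, Fintype.card_subtype]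
  congr 2
  ext C
  simp only [LCD.LS, Finset.mem_filter, Finset.mem_univ, true_and, le_top, two_mul]
  refine and_congr_right fun _ => ?_
  constructor
  · intro h x hx hc
    have : x ∈ (C : Set (Fin (k + k) → F)) ∩ {x | ∀ c ∈ C, ∑ i, x i * c i = 0} := ⟨hx, hc⟩
    rw [h] at this
    exact this
  · intro h
    ext x
    constructor
    · rintro ⟨hx, hc⟩; exact h x hx hc
    · rintro rfl
      exact ⟨C.zero_mem, fun c _ => by simp⟩
end
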